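/- Let 0 < ε_1 < … < ε_m be tolerances and let c be the cost values of the dynamic program. Then the minimum, over all ε_m-simplifications π, of the sum over the edges (x,y) of π of c(m,(x,y)) equals the minimum, over all progressive simplifications S_1, …, S_m for ε_1 < … < ε_m, of Σ_{k=1}^m (|S_k| − 1). Equivalently, the minimum cumulative size Σ_{k=1}^m |S_k| over progressive simplifications equals m plus the minimum c(m,·)-cost of an ε_m-simplification. -/

import Mathlib

open Metric

noncomputable section

/-- The Euclidean plane. -/
abbrev Pt : Type := EuclideanSpace ℝ (Fin 2)

/-- The subcurve `⟨p i, …, p j⟩`: the union of the segments between consecutive vertices. -/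
def subcurve {n : ℕ} (p : Fin n → Pt) (i j : Fin n) : Set Pt :=
  ⋃ (t : Fin n) (_ : i ≤ t ∧ t < j) (h : (t : ℕ) + 1 < n),
    segment ℝ (p t) (p ⟨(t : ℕ) + 1, h⟩)

/-- The (Hausdorff-distance) error of the shortcut `(i, j)`. -/
def err {n : ℕ} (p : Fin n → Pt) (i j : Fin n) : ℝ :=
  Metric.hausdorffDist (segment ℝ (p i) (p j)) (subcurve p i j)

/-- The edges (consecutive pairs) of a path given as a list of vertices. -/
def edges {n : ℕ} (l : List (Fin n)) : List (Fin n × Fin n) := l.zip l.tail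

/-- `l` is a path from `i` to `j` at tolerance `ε`: a strictly increasing sequence of
indices starting at `i`, ending at `j`, all of whose edges are valid shortcuts for `ε`. -/
def IsPath {n : ℕ} (p : Fin n → Pt) (ε : ℝ) (i j : Fin n) (l : List (Fin n)) : Prop :=
  l.Chain' (· < ·) ∧ l.head? = some i ∧ l.getLast? = some j ∧
    ∀ e ∈ edges l, err p e.1 e.2 ≤ ε

/-- The cost of a path: the sum of the costs of its edges. -/
def pathCost {n : ℕ} {α : Type*} [AddCommMonoid α] (c : Fin n → Fin n → α)
    (l : List (Fin n)) : α :=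
  ((edges l).map (fun e => c e.1 e.2)).sum

/-- Minimum cost (natural-valued) of a path from `i` to `j` at tolerance `ε`. -/
def minCost {n : ℕ} (p : Fin n → Pt) (ε : ℝ) (c : Fin n → Fin n → ℕ) (i j : Fin n) : ℕ :=
  sInf {s : ℕ | ∃ l, IsPath p ε i j l ∧ pathCost c l = s}

/-- Minimum cost (real-valued) of a path from `i` to `j` at tolerance `ε`. -/
def minCostR {n : ℕ} (p : Fin n → Pt) (ε : ℝ) (c : Fin n → Fin n → ℝ) (i j : Fin n) : ℝ :=
  sInf {s : ℝ | ∃ l, IsPath p ε i j l ∧ pathCost c l = s}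

/-- `l` is a minimum-cost path from `i` to `j` at tolerance `ε` w.r.t. cost `c`. -/
def IsMinPath {n : ℕ} (p : Fin n → Pt) (ε : ℝ) (c : Fin n → Fin n → ℕ) (i j : Fin n)
    (l : List (Fin n)) : Prop :=
  IsPath p ε i j l ∧ ∀ l', IsPath p ε i j l' → pathCost c l ≤ pathCost c l'

/-- `L'` is obtained from `L` by replacing each edge `(i, j)` of `L` by a minimum-cost
path from `i` to `j` at tolerance `ε`, and concatenating. -/
def Refines {n : ℕ} (p : Fin n → Pt) (ε : ℝ) (c : Fin n → Fin n → ℕ)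
    (L L' : List (Fin n)) : Prop :=
  ∃ f : Fin n × Fin n → List (Fin n),
    (∀ e ∈ edges L, IsMinPath p ε c e.1 e.2 (f e)) ∧
    L' = L.take 1 ++ ((edges L).map (fun e => (f e).tail)).flatten

/-- `S 1, …, S m` is a progressive simplification for the tolerances `ε 1 < … < ε m`:
each `S k` is an `ε k`-simplification (a path from `v0` to `v1`), and every vertex of
`S (k+1)` is a vertex of `S k`. -/
def ProgSimp {n : ℕ} (p : Fin n → Pt) (m : ℕ) (ε : ℕ → ℝ) (v0 v1 : Fin n)
    (S : ℕ → List (Fin n)) : Prop :=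
  (∀ k, 1 ≤ k → k ≤ m → IsPath p (ε k) v0 v1 (S k)) ∧
  (∀ k, 1 ≤ k → k < m → ∀ v ∈ S (k + 1), v ∈ S k)

section Paths

variable {n : ℕ}

theorem edges_cons_cons (a b : Fin n) (l : List (Fin n)) :
    edges (a :: b :: l) = (a, b) :: edges (b :: l) := rfl

theorem edges_append_cons (u w : List (Fin n)) (b : Fin n) :
    edges (u ++ b :: w) = edges (u ++ [b]) ++ edges (b :: w) := by
  induction u with
  | nil => simp [edges]
  | cons a u ih =>
    cases u with
    | nil => simp [edges]
    | cons a' u => simpa [edges_cons_cons] using ih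

theorem length_edges (l : List (Fin n)) : (edges l).length = l.length - 1 := by
  simp [edges]

theorem fst_lt_snd_of_mem_edges {l : List (Fin n)} (h : l.IsChain (· < ·))
    {e : Fin n × Fin n} (he : e ∈ edges l) : e.1 < e.2 := by
  induction l with
  | nil => simp [edges] at he
  | cons a l ih =>
    cases l with
    | nil => simp [edges] at he
    | cons b l =>
      rw [List.isChain_cons_cons] at h
      rw [edges_cons_cons, List.mem_cons] at he
      rcases he with rfl | he
      · exact h.1
      · exact ih h.2 he

theorem pathCost_append_cons {α : Type*} [AddCommMonoid α] (c : Fin n → Fin n → α)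
    (u w : List (Fin n)) (b : Fin n) :
    pathCost c (u ++ b :: w) = pathCost c (u ++ [b]) + pathCost c (b :: w) := by
  simp [pathCost, edges_append_cons u w b]

theorem pathCost_cons_cons {α : Type*} [AddCommMonoid α] (c : Fin n → Fin n → α)
    (a b : Fin n) (l : List (Fin n)) :
    pathCost c (a :: b :: l) = c a b + pathCost c (b :: l) := by
  simp [pathCost, edges_cons_cons]

theorem isPath_append_cons (p : Fin n → Pt) (ε : ℝ) (i j b : Fin n) (u w : List (Fin n)) :
    IsPath p ε i j (u ++ b :: w) ↔ IsPath p ε i b (u ++ [b]) ∧ IsPath p ε b j (b :: w) := by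
  have hhead : (u ++ b :: w).head? = (u ++ [b]).head? := by cases u <;> rfl
  have hlast : (u ++ b :: w).getLast? = (b :: w).getLast? := by
    rw [List.getLast?_append]; simp [List.getLast?_cons]
  have hchain : (u ++ b :: w).IsChain (· < ·) ↔
      (u ++ [b]).IsChain (· < ·) ∧ (b :: w).IsChain (· < ·) := List.isChain_split
  unfold IsPath
  rw [hhead, hlast, edges_append_cons u w b]
  simp only [List.mem_append, or_imp, forall_and]
  have hh : (u ++ [b]).getLast? = some b ∧ (b :: w).head? = some b := by simp
  exact ⟨fun h => ⟨⟨(hchain.1 h.1).1, h.2.1, hh.1, h.2.2.2.1⟩,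
      (hchain.1 h.1).2, hh.2, h.2.2.1, h.2.2.2.2⟩,
    fun h => ⟨hchain.2 ⟨h.1.1, h.2.1⟩, h.1.2.1, h.2.2.2.1, h.1.2.2.2, h.2.2.2.2⟩⟩

theorem IsPath.exists_eq_cons {p : Fin n → Pt} {ε : ℝ} {i j : Fin n} {l : List (Fin n)}
    (h : IsPath p ε i j l) : ∃ w, l = i :: w := by
  obtain ⟨-, h, -⟩ := h
  cases l with
  | nil => simp at h
  | cons a l => exact ⟨l, by simpa using h⟩

theorem IsPath.exists_eq_concat {p : Fin n → Pt} {ε : ℝ} {i j : Fin n} {l : List (Fin n)}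
    (h : IsPath p ε i j l) : ∃ u, l = u ++ [j] := by
  obtain ⟨-, -, h, -⟩ := h
  exact List.getLast?_eq_some_iff.mp h

theorem isPath_singleton (p : Fin n → Pt) (ε : ℝ) (i : Fin n) : IsPath p ε i i [i] := by
  exact ⟨List.isChain_singleton i, rfl, rfl, by simp [edges]⟩

theorem err_succ (p : Fin n → Pt) (i j : Fin n) (h : (i : ℕ) + 1 = j) : err p i j = 0 := by
  have hs : subcurve p i j = segment ℝ (p i) (p j) := by
    ext x
    simp only [subcurve, Set.mem_iUnion, exists_prop]
    constructor
    · rintro ⟨t, ⟨h1, h2⟩, h3, hx⟩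
      obtain rfl : t = i := by
        apply Fin.ext
        rw [Fin.le_def] at h1
        rw [Fin.lt_def] at h2
        omega
      obtain rfl : j = ⟨(t : ℕ) + 1, h3⟩ := Fin.ext h.symm
      exact hx
    · intro hx
      have h3 : (i : ℕ) + 1 < n := h ▸ j.2
      obtain rfl : j = ⟨(i : ℕ) + 1, h3⟩ := Fin.ext h.symm
      exact ⟨i, ⟨le_rfl, by simp [Fin.lt_def]⟩, h3, hx⟩
  rw [err, hs, Metric.hausdorffDist_self_zero]

/-- The curve itself is a path at every nonnegative tolerance. -/
theorem exists_isPath (p : Fin n → Pt) {ε : ℝ} (hε : 0 ≤ ε) {i j : Fin n} (hij : i ≤ j) :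
    ∃ l, IsPath p ε i j l := by
  obtain ⟨d, hd⟩ := Nat.exists_eq_add_of_le (Fin.le_def.mp hij)
  induction d generalizing i with
  | zero =>
    obtain rfl : i = j := Fin.ext (by omega)
    exact ⟨[i], isPath_singleton p ε i⟩
  | succ d ih =>
    have h1 : (i : ℕ) + 1 < n := by have := j.2; omega
    obtain ⟨l, hl⟩ := ih (i := ⟨(i : ℕ) + 1, h1⟩) (by rw [Fin.le_def]; simp; omega)
      (by simp; omega)
    obtain ⟨w, rfl⟩ := hl.exists_eq_cons
    refine ⟨[i] ++ _ :: w, (isPath_append_cons ..).2 ⟨?_, hl⟩⟩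
    exact ⟨List.isChain_pair.2 (by simp [Fin.lt_def, -Fin.val_fin_lt]), rfl, rfl,
      by simp [edges, err_succ, hε]⟩

theorem minCost_le {p : Fin n → Pt} {ε : ℝ} {i j : Fin n} {l : List (Fin n)}
    (h : IsPath p ε i j l) (c : Fin n → Fin n → ℕ) : minCost p ε c i j ≤ pathCost c l :=
  Nat.sInf_le ⟨l, h, rfl⟩

theorem exists_pathCost_eq_minCost (p : Fin n → Pt) {ε : ℝ} (hε : 0 ≤ ε)
    (c : Fin n → Fin n → ℕ) {i j : Fin n} (hij : i ≤ j) :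
    ∃ l, IsPath p ε i j l ∧ pathCost c l = minCost p ε c i j := by
  obtain ⟨l, hl⟩ := exists_isPath p hε hij
  exact Nat.sInf_mem (s := {s : ℕ | ∃ l, IsPath p ε i j l ∧ pathCost c l = s}) ⟨_, l, hl, rfl⟩

theorem pathCost_minCost_le {p : Fin n → Pt} {ε δ : ℝ} {i j : Fin n} (c : Fin n → Fin n → ℕ)
    {L L' : List (Fin n)} (hL : IsPath p δ i j L) (hL' : IsPath p ε i j L')
    (hsub : ∀ v ∈ L, v ∈ L') : pathCost (minCost p ε c) L ≤ pathCost c L' := by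
  induction L generalizing i L' with
  | nil => simp [pathCost, edges]
  | cons a L ih =>
    cases L with
    | nil => simp [pathCost, edges]
    | cons b L =>
      obtain ⟨u, w, rfl⟩ := List.append_of_mem (hsub b (by simp))
      obtain rfl : i = a := by simpa [eq_comm] using hL.2.1
      obtain ⟨-, hL⟩ := (isPath_append_cons p δ i j b [i] L).1 hL
      obtain ⟨hu, hw⟩ := (isPath_append_cons p ε i j b u w).1 hL'
      have hlow : ∀ v ∈ b :: L, b ≤ v := by
        have h := List.isChain_iff_pairwise.1 hL.1
        rw [List.pairwise_cons] at h
        simpa using fun v hv => (h.1 v hv).le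
      have hup : ∀ v ∈ u, v < b := by
        have h := List.isChain_iff_pairwise.1 hu.1
        rw [List.pairwise_append] at h
        exact fun v hv => h.2.2 v hv b (by simp)
      rw [pathCost_cons_cons, pathCost_append_cons]
      refine add_le_add (minCost_le hu c) (ih hL hw fun v hv => ?_)
      rcases List.mem_append.1 (hsub v (List.mem_cons_of_mem _ hv)) with h | h
      · exact absurd (hup v h) (hlow v hv).not_gt
      · exact h

theorem exists_pathCost_eq_pathCost_minCost {p : Fin n → Pt} {ε δ : ℝ} (hε : 0 ≤ ε)
    {i j : Fin n} (c : Fin n → Fin n → ℕ) {L : List (Fin n)} (hL : IsPath p δ i j L) :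
    ∃ L', IsPath p ε i j L' ∧ (∀ v ∈ L, v ∈ L') ∧
      pathCost c L' = pathCost (minCost p ε c) L := by
  induction L generalizing i with
  | nil => simp [IsPath] at hL
  | cons a L ih =>
    obtain rfl : i = a := by simpa [eq_comm] using hL.2.1
    cases L with
    | nil =>
      obtain rfl : i = j := by simpa using hL.2.2.1
      exact ⟨[i], isPath_singleton p ε i, by simp, rfl⟩
    | cons b L =>
      have hib : i < b := (List.isChain_cons_cons.1 hL.1).1
      obtain ⟨-, hL⟩ := (isPath_append_cons p δ i j b [i] L).1 hL
      obtain ⟨L', hL', hsub, hcost⟩ := ih hL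
      obtain ⟨M, hM, hMcost⟩ := exists_pathCost_eq_minCost p hε c hib.le
      obtain ⟨w, rfl⟩ := hL'.exists_eq_cons
      obtain ⟨u, rfl⟩ := hM.exists_eq_concat
      have hpath := (isPath_append_cons p ε i j b u w).2 ⟨hM, hL'⟩
      refine ⟨u ++ b :: w, hpath, ?_, ?_⟩
      · intro v hv
        rcases List.mem_cons.1 hv with rfl | hv
        · exact List.mem_of_mem_head? hpath.2.1
        · exact List.mem_append_right _ (hsub v hv)
      · rw [pathCost_append_cons, pathCost_cons_cons, hMcost, hcost]

theorem pathCost_eq_length_sub_one {p : Fin n → Pt} {ε : ℝ} {i j : Fin n}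
    {c : Fin n → Fin n → ℕ} {L : List (Fin n)} (hL : IsPath p ε i j L)
    (hc : ∀ i j : Fin n, i < j → err p i j ≤ ε → c i j = 1) :
    pathCost c L = L.length - 1 := by
  have h : (edges L).map (fun e => c e.1 e.2) = (edges L).map (fun _ => 1) :=
    List.map_congr_left fun e he => hc _ _ (fst_lt_snd_of_mem_edges hL.1 he) (hL.2.2.2 e he)
  simp [pathCost, h, length_edges]

theorem pathCost_eq_length_sub_one_add {p : Fin n → Pt} {ε : ℝ} {i j : Fin n}
    {c d : Fin n → Fin n → ℕ} {L : List (Fin n)} (hL : IsPath p ε i j L)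
    (hc : ∀ i j : Fin n, i < j → err p i j ≤ ε → c i j = 1 + d i j) :
    pathCost c L = (L.length - 1) + pathCost d L := by
  have h : (edges L).map (fun e => c e.1 e.2) = (edges L).map (fun e => 1 + d e.1 e.2) :=
    List.map_congr_left fun e he => hc _ _ (fst_lt_snd_of_mem_edges hL.1 he) (hL.2.2.2 e he)
  simp [pathCost, h, length_edges, List.sum_map_add]

theorem ProgSimp.of_le {p : Fin n → Pt} {k m : ℕ} {ε : ℕ → ℝ} {i j : Fin n}
    {S : ℕ → List (Fin n)} (h : ProgSimp p m ε i j S) (hkm : k ≤ m) : ProgSimp p k ε i j S :=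
  ⟨fun t h1 h2 => h.1 t h1 (h2.trans hkm), fun t h1 h2 => h.2 t h1 (h2.trans_le hkm)⟩

theorem ProgSimp.sum_length {p : Fin n → Pt} {m : ℕ} {ε : ℕ → ℝ} {i j : Fin n}
    {S : ℕ → List (Fin n)} (h : ProgSimp p m ε i j S) :
    ∑ k ∈ Finset.Icc 1 m, (S k).length = m + ∑ k ∈ Finset.Icc 1 m, ((S k).length - 1) := by
  have hlen : ∀ k ∈ Finset.Icc 1 m, (S k).length = 1 + ((S k).length - 1) := by
    intro k hk
    rw [Finset.mem_Icc] at hk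
    obtain ⟨w, hw⟩ := (h.1 k hk.1 hk.2).exists_eq_cons
    simp [hw, add_comm]
  rw [Finset.sum_congr rfl hlen, Finset.sum_add_distrib]
  simp

theorem ProgSimp.pathCost_le {m : ℕ} {p : Fin n → Pt} {ε : ℕ → ℝ}
    {c : ℕ → Fin n → Fin n → ℕ}
    (hc1 : ∀ i j : Fin n, i < j → err p i j ≤ ε 1 → c 1 i j = 1)
    (hck : ∀ k, 2 ≤ k → k ≤ m → ∀ i j : Fin n, i < j → err p i j ≤ ε k →
      c k i j = 1 + minCost p (ε (k - 1)) (c (k - 1)) i j)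
    {i j : Fin n} {k : ℕ} (hk1 : 1 ≤ k) (hkm : k ≤ m) {S : ℕ → List (Fin n)}
    (h : ProgSimp p k ε i j S) :
    pathCost (c k) (S k) ≤ ∑ t ∈ Finset.Icc 1 k, ((S t).length - 1) := by
  induction k, hk1 using Nat.le_induction with
  | base => simp [pathCost_eq_length_sub_one (h.1 1 le_rfl le_rfl) hc1]
  | succ k hk ih =>
    have hpath := h.1 (k + 1) (by omega) le_rfl
    rw [pathCost_eq_length_sub_one_add hpath (hck (k + 1) (by omega) hkm),
      Finset.sum_Icc_succ_top (by omega), add_comm]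
    exact Nat.add_le_add_right ((pathCost_minCost_le _ hpath (h.1 k hk (by omega))
      (h.2 k hk (by omega))).trans (ih (by omega) (h.of_le (by omega)))) _

theorem exists_progSimp_sum_eq_pathCost {m : ℕ} {p : Fin n → Pt} {ε : ℕ → ℝ}
    (hε : ∀ k, 1 ≤ k → k ≤ m → 0 ≤ ε k) {c : ℕ → Fin n → Fin n → ℕ}
    (hc1 : ∀ i j : Fin n, i < j → err p i j ≤ ε 1 → c 1 i j = 1)
    (hck : ∀ k, 2 ≤ k → k ≤ m → ∀ i j : Fin n, i < j → err p i j ≤ ε k →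
      c k i j = 1 + minCost p (ε (k - 1)) (c (k - 1)) i j)
    {i j : Fin n} {k : ℕ} (hk1 : 1 ≤ k) (hkm : k ≤ m) {L : List (Fin n)}
    (hL : IsPath p (ε k) i j L) :
    ∃ S, ProgSimp p k ε i j S ∧ S k = L ∧
      ∑ t ∈ Finset.Icc 1 k, ((S t).length - 1) = pathCost (c k) L := by
  induction k, hk1 using Nat.le_induction generalizing L with
  | base =>
    refine ⟨fun _ => L, ⟨fun t h1 h2 => ?_, fun t h1 h2 => by omega⟩, rfl, ?_⟩
    · obtain rfl : t = 1 := by omega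
      exact hL
    · simp [pathCost_eq_length_sub_one hL hc1]
  | succ k hk ih =>
    obtain ⟨L', hL', hsub, hcost⟩ :=
      exists_pathCost_eq_pathCost_minCost (hε k hk (by omega)) (c k) hL
    obtain ⟨S, hS, rfl, hsum⟩ := ih (by omega) hL'
    have hne : ∀ t, t ≤ k → Function.update S (k + 1) L t = S t := fun t ht =>
      Function.update_of_ne (by omega) _ _
    have htop : Function.update S (k + 1) L (k + 1) = L := Function.update_self ..
    refine ⟨Function.update S (k + 1) L, ⟨fun t h1 h2 => ?_, fun t h1 h2 => ?_⟩, htop, ?_⟩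
    · rcases Nat.le_succ_iff.1 h2 with h2 | rfl
      · rw [hne t h2]
        exact hS.1 t h1 h2
      · rwa [htop]
    · rw [hne t (by omega)]
      rcases (Nat.lt_succ_iff.1 h2).lt_or_eq with h2 | rfl
      · rw [hne (t + 1) h2]
        exact hS.2 t h1 h2
      · rwa [htop]
    · rw [pathCost_eq_length_sub_one_add hL (hck (k + 1) (by omega) hkm),
        Finset.sum_Icc_succ_top (by omega), htop, Nat.add_sub_cancel, ← hcost, ← hsum, add_comm]
      congr 1
      exact Finset.sum_congr rfl fun t ht => by rw [hne t (Finset.mem_Icc.1 ht).2]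

end Paths

/-- The minimum `c m`-cost of an `ε m`-simplification equals the minimum
of `Σ_{k=1}^m (|S k| - 1)` over all progressive simplifications, and the minimum
cumulative size `Σ_{k=1}^m |S k|` equals `m` plus the former minimum. -/
theorem min_cost_eq_min_progressive {n m : ℕ} (hn : 2 ≤ n) (hm : 1 ≤ m) (p : Fin n → Pt)
    (ε : ℕ → ℝ) (hε1 : 0 < ε 1)
    (hεmono : ∀ k, 1 ≤ k → k < m → ε k < ε (k + 1))
    (c : ℕ → Fin n → Fin n → ℕ)
    (hc1 : ∀ i j : Fin n, i < j → err p i j ≤ ε 1 → c 1 i j = 1)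
    (hck : ∀ k, 2 ≤ k → k ≤ m → ∀ i j : Fin n, i < j → err p i j ≤ ε k →
      c k i j = 1 + minCost p (ε (k - 1)) (c (k - 1)) i j) :
    minCost p (ε m) (c m) (⟨0, by omega⟩ : Fin n) (⟨n - 1, by omega⟩ : Fin n) =
      sInf {s : ℕ | ∃ S : ℕ → List (Fin n),
        ProgSimp p m ε (⟨0, by omega⟩ : Fin n) (⟨n - 1, by omega⟩ : Fin n) S ∧
        ∑ k ∈ Finset.Icc 1 m, ((S k).length - 1) = s} ∧
    sInf {s : ℕ | ∃ S : ℕ → List (Fin n),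
        ProgSimp p m ε (⟨0, by omega⟩ : Fin n) (⟨n - 1, by omega⟩ : Fin n) S ∧
        ∑ k ∈ Finset.Icc 1 m, (S k).length = s} =
      m + minCost p (ε m) (c m) (⟨0, by omega⟩ : Fin n) (⟨n - 1, by omega⟩ : Fin n) := by
  have hε : ∀ k, 1 ≤ k → k ≤ m → 0 ≤ ε k := by
    intro k hk
    induction k, hk using Nat.le_induction with
    | base => exact fun _ => hε1.le
    | succ k hk ih => exact fun h => (ih (by omega)).trans (hεmono k hk h).le
  obtain ⟨L, hL, hLcost⟩ := exists_pathCost_eq_minCost p (hε m hm le_rfl) (c m)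
    (i := (⟨0, by omega⟩ : Fin n)) (j := ⟨n - 1, by omega⟩) (by simp [Fin.le_def])
  obtain ⟨S, hS, -, hsum⟩ := exists_progSimp_sum_eq_pathCost hε hc1 hck hm le_rfl hL
  have hle : ∀ T, ProgSimp p m ε (⟨0, by omega⟩ : Fin n) (⟨n - 1, by omega⟩ : Fin n) T →
      minCost p (ε m) (c m) (⟨0, by omega⟩ : Fin n) (⟨n - 1, by omega⟩ : Fin n) ≤
        ∑ k ∈ Finset.Icc 1 m, ((T k).length - 1) := fun T hT =>
    (minCost_le (hT.1 m hm le_rfl) (c m)).trans (hT.pathCost_le hc1 hck hm le_rfl)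
  constructor
  · symm
    refine IsLeast.csInf_eq ⟨⟨S, hS, hsum.trans hLcost⟩, ?_⟩
    rintro _ ⟨T, hT, rfl⟩
    exact hle T hT
  · refine IsLeast.csInf_eq ⟨⟨S, hS, by rw [hS.sum_length, hsum, hLcost]⟩, ?_⟩
    rintro _ ⟨T, hT, rfl⟩
    rw [hT.sum_length]
    exact Nat.add_le_add_left (hle T hT) m
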